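/- For every integer Δ ≥ 3 and every intolerance parameter τ with 2/Δ < τ < 1, there exist a Δ-regular finite simple graph G = (V,E), a set A of agents with |A| < |V| partitioned into two types, and an improving response cycle for the one-versus-all jump Schelling game (1-k-JSG) with parameter τ on G; in particular, the 1-k-JSG for τ > 2/Δ on Δ-regular graphs is not a potential game. -/

import Mathlib

open Finset
open scoped Classical

noncomputable section

namespace Schelling

variable {V A : Type*} [Fintype V] [Fintype A] {k : ℕ}

/-- The set of neighbors of agent `a` under placement `p`. -/
def nbrs (G : SimpleGraph V) (p : A → V) (a : A) : Finset A :=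
  Finset.univ.filter fun b => G.Adj (p a) (p b)

/-- `|N⁺_p(a)|`: the number of neighbors of `a` under `p` having the same type as `a`. -/
def posCount (G : SimpleGraph V) (t : A → Fin k) (p : A → V) (a : A) : ℕ :=
  (Finset.univ.filter fun b => G.Adj (p a) (p b) ∧ t b = t a).card

/-- One-versus-all `|N⁻_p(a)|`: the number of neighbors of `a` whose type differs from `t a`. -/
def negCountAll (G : SimpleGraph V) (t : A → Fin k) (p : A → V) (a : A) : ℕ :=
  (Finset.univ.filter fun b => G.Adj (p a) (p b) ∧ t b ≠ t a).card

/-- One-versus-one `|N⁻_p(a)|`: the size of a largest set of neighbors of `a`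
of one common type different from `t a`. -/
def negCountOne (G : SimpleGraph V) (t : A → Fin k) (p : A → V) (a : A) : ℕ :=
  (Finset.univ.filter fun T : Fin k => T ≠ t a).sup fun T =>
    (Finset.univ.filter fun b => G.Adj (p a) (p b) ∧ t b = T).card

/-- The cost of agent `a` in the one-versus-all version. -/
def costAll (G : SimpleGraph V) (t : A → Fin k) (τ : ℝ) (p : A → V) (a : A) : ℝ :=
  if nbrs G p a = ∅ then τ
  else max 0 (τ - (posCount G t p a : ℝ) /
    ((posCount G t p a : ℝ) + (negCountAll G t p a : ℝ)))

/-- The cost of agent `a` in the one-versus-one version. -/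
def costOne (G : SimpleGraph V) (t : A → Fin k) (τ : ℝ) (p : A → V) (a : A) : ℝ :=
  if nbrs G p a = ∅ then τ
  else max 0 (τ - (posCount G t p a : ℝ) /
    ((posCount G t p a : ℝ) + (negCountOne G t p a : ℝ)))

/-- A swap of the (distinct) agents `a` and `b` turning placement `p` into `q`,
which strictly decreases the cost of both agents (cost function `c`). -/
def SwapMove (c : (A → V) → A → ℝ) (p q : A → V) (a b : A) : Prop :=
  a ≠ b ∧ q = p ∘ (Equiv.swap a b) ∧ c q a < c p a ∧ c q b < c p b

/-- `q` is obtained from `p` by an improving swap. -/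
def ImprovingSwap (c : (A → V) → A → ℝ) (p q : A → V) : Prop :=
  ∃ a b, SwapMove c p q a b

/-- A placement is swap-stable if it admits no improving swap. -/
def SwapStable (c : (A → V) → A → ℝ) (p : A → V) : Prop :=
  ∀ q, ¬ ImprovingSwap c p q

/-- Some finite sequence of improving swaps starting at `p₀` ends in a swap-stable placement. -/
def ReachesStableSwap (c : (A → V) → A → ℝ) (p₀ : A → V) : Prop :=
  ∃ (n : ℕ) (q : ℕ → A → V), q 0 = p₀ ∧
    (∀ i < n, ImprovingSwap c (q i) (q (i + 1))) ∧ SwapStable c (q n)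

/-- A jump of agent `a` to the node `v` (unoccupied under `p`) turning placement `p`
into `q`, which strictly decreases the cost of `a` (cost function `c`). -/
def JumpMove (c : (A → V) → A → ℝ) (p q : A → V) (a : A) (v : V) : Prop :=
  (∀ b, p b ≠ v) ∧ q = Function.update p a v ∧ c q a < c p a

/-- `q` is obtained from `p` by an improving jump. -/
def ImprovingJump (c : (A → V) → A → ℝ) (p q : A → V) : Prop :=
  ∃ a v, JumpMove c p q a v

/-- A placement is jump-stable if it admits no improving jump. -/
def JumpStable (c : (A → V) → A → ℝ) (p : A → V) : Prop :=
  ∀ q, ¬ ImprovingJump c p q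

/-- Some finite sequence of improving jumps starting at `p₀` ends in a jump-stable placement. -/
def ReachesStableJump (c : (A → V) → A → ℝ) (p₀ : A → V) : Prop :=
  ∃ (n : ℕ) (q : ℕ → A → V), q 0 = p₀ ∧
    (∀ i < n, ImprovingJump c (q i) (q (i + 1))) ∧ JumpStable c (q n)

/-- The placement cost: the number of discontent agents (one-versus-all cost). -/
def placementCost (G : SimpleGraph V) (t : A → Fin k) (τ : ℝ) (p : A → V) : ℕ :=
  (Finset.univ.filter fun a => costAll G t τ p a ≠ 0).card

/-- A graph is `Δ`-regular if every node has exactly `Δ` neighbors. -/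
def IsRegular (G : SimpleGraph V) (Δ : ℕ) : Prop :=
  ∀ v : V, (Finset.univ.filter fun u => G.Adj v u).card = Δ

section Aux

/-- Base adjacency on the four mobile nodes `0-1`, `2-3`. -/
def badj (a b : Fin 4) : Bool := a != b && a.val / 2 == b.val / 2

/-- Hubs are the nodes `0` and `2`. -/
def hub (a : Fin 4) : Bool := a.val % 2 == 0

abbrev BV (D : ℕ) := Fin 4 ⊕ (Fin 2 × Fin (D + 2))

abbrev BA (D : ℕ) := Fin 3 ⊕ (Fin 2 × Fin (D + 2))

def HAdj (D : ℕ) : BV D → BV D → Prop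
  | Sum.inl a, Sum.inl b => badj a b = true
  | Sum.inl a, Sum.inr l => a.val = 2 * l.1.val
  | Sum.inr l, Sum.inl a => a.val = 2 * l.1.val
  | Sum.inr _, Sum.inr _ => False

def H (D : ℕ) : SimpleGraph (BV D) where
  Adj := HAdj D
  symm := ⟨by
    rintro (a | l) (b | m) h
    · revert a b
      show ∀ a b : Fin 4, badj a b = true → badj b a = true
      decide
    · exact h
    · exact h
    · exact h⟩
  loopless := ⟨by
    rintro (a | l) h
    · revert a
      show ∀ a : Fin 4, badj a a = true → False
      decide
    · exact h⟩

/-- flipping one coordinate -/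
def flip {n : ℕ} (i : Fin n) (s : Fin n → Bool) : Fin n → Bool :=
  Function.update s i (!(s i))

lemma flip_flip {n : ℕ} (i : Fin n) (s : Fin n → Bool) : flip i (flip i s) = s := by
  funext j
  by_cases h : j = i
  · subst h; simp [flip]
  · simp [flip, h]

lemma flip_ne {n : ℕ} (i : Fin n) (s : Fin n → Bool) : flip i s ≠ s := by
  intro h
  have := congrFun h i
  simp [flip] at this

lemma flip_inj {n : ℕ} (s : Fin n → Bool) : Function.Injective (fun i => flip i s) := by
  intro i j h
  by_contra hij
  have := congrFun h i
  simp [flip, hij] at this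

def deg {V : Type*} [Fintype V] (G : SimpleGraph V) (v : V) : ℕ :=
  (Finset.univ.filter fun u => G.Adj v u).card

/-- regularization -/
def reg {V : Type*} [Fintype V] (G : SimpleGraph V) (n : ℕ) :
    SimpleGraph (V × (Fin n → Bool)) where
  Adj x y := (x.2 = y.2 ∧ G.Adj x.1 y.1) ∨
    (x.1 = y.1 ∧ ∃ i : Fin n, i.val < n - deg G x.1 ∧ y.2 = flip i x.2)
  symm := ⟨by
    rintro ⟨v, s⟩ ⟨w, r⟩ (⟨h1, h2⟩ | ⟨h1, i, h2, h3⟩)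
    · exact Or.inl ⟨h1.symm, h2.symm⟩
    · simp only at h1 h2 h3
      subst h1
      refine Or.inr ⟨rfl, i, h2, ?_⟩
      simp only [h3, flip_flip]⟩
  loopless := ⟨by
    rintro ⟨v, s⟩ (⟨h1, h2⟩ | ⟨h1, i, h2, h3⟩)
    · exact G.loopless.irrefl _ h2
    · exact flip_ne i s h3.symm⟩

lemma reg_isRegular {V : Type*} [Fintype V] (G : SimpleGraph V) (n : ℕ)
    (h : ∀ v, deg G v ≤ n) : IsRegular (reg G n) n := by
  rintro ⟨v, s⟩
  have e : (Finset.univ.filter fun u => (reg G n).Adj (v, s) u) =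
      ((Finset.univ.filter fun u => G.Adj v u).image fun w => (w, s)) ∪
      ((Finset.univ.filter fun i : Fin n => i.val < n - deg G v).image
        fun i => (v, flip i s)) := by
    ext ⟨w, r⟩
    simp only [Finset.mem_filter, Finset.mem_univ, true_and, Finset.mem_union,
      Finset.mem_image, Prod.mk.injEq]
    change ((s = r ∧ G.Adj v w) ∨
      (v = w ∧ ∃ i : Fin n, i.val < n - deg G v ∧ r = flip i s)) ↔ _
    constructor
    · rintro (⟨h1, h2⟩ | ⟨h1, i, h2, h3⟩)
      · exact Or.inl ⟨w, h2, rfl, h1⟩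
      · exact Or.inr ⟨i, h2, h1, h3.symm⟩
    · rintro (⟨w', h2, rfl, h1⟩ | ⟨i, h2, h1, h3⟩)
      · exact Or.inl ⟨h1, h2⟩
      · exact Or.inr ⟨h1, i, h2, h3.symm⟩
  rw [e, Finset.card_union_of_disjoint, Finset.card_image_of_injective,
    Finset.card_image_of_injective]
  · have h1 : (Finset.univ.filter fun i : Fin n => i.val < n - deg G v).card = n - deg G v := by
      rw [Fin.card_filter_val_lt]
      simp
    rw [h1]
    have := h v
    unfold deg at *
    omega
  · intro i j hij
    exact flip_inj s (Prod.mk.inj hij).2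
  · intro i j hij
    exact (Prod.mk.inj hij).1
  · rw [Finset.disjoint_left]
    simp only [Finset.mem_image, not_exists, not_and]
    rintro _ ⟨w, -, rfl⟩ i - hi
    exact flip_ne i s (Prod.mk.inj hi).2

lemma deg_le (D : ℕ) (v : BV D) : deg (H D) v ≤ D + 3 := by
  unfold deg
  rw [Finset.card_filter, Fintype.sum_sum_type, Fintype.sum_prod_type]
  rcases v with a | ⟨s, j⟩
  · fin_cases a <;>
      simp [-Finset.sum_boole, H, HAdj, badj, Fin.sum_univ_four, Fin.sum_univ_two] <;> omega
  · fin_cases s <;>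
      simp [-Finset.sum_boole, H, HAdj, badj, Fin.sum_univ_four, Fin.sum_univ_two]

def ty (D : ℕ) : BA D → Fin 2
  | Sum.inl _ => 0
  | Sum.inr l => if l.2 = 0 then 0 else 1

def place (D : ℕ) (f : Fin 3 → Fin 4) : BA D → BV D × (Fin (D + 3) → Bool)
  | Sum.inl i => (Sum.inl (f i), fun _ => false)
  | Sum.inr l => (Sum.inr l, fun _ => false)

lemma place_adj (D : ℕ) (f : Fin 3 → Fin 4) (a b : BA D) :
    (reg (H D) (D + 3)).Adj (place D f a) (place D f b) ↔
      (H D).Adj (place D f a).1 (place D f b).1 := by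
  have hs : ∀ a, (place D f a).2 = fun _ => false := by rintro (i | l) <;> rfl
  constructor
  · rintro (⟨h1, h2⟩ | ⟨h1, i, h2, h3⟩)
    · exact h2
    · rw [hs, hs] at h3
      exact absurd h3.symm (flip_ne _ _)
  · intro h
    exact Or.inl ⟨by rw [hs, hs], h⟩

def mob (f : Fin 3 → Fin 4) (i : Fin 3) : ℕ :=
  ∑ j : Fin 3, if badj (f i) (f j) = true then 1 else 0

lemma four : ∀ a : Fin 4, a = 0 ∨ a = 1 ∨ a = 2 ∨ a = 3 := by decide

lemma pos_eq (D : ℕ) (f : Fin 3 → Fin 4) (i : Fin 3) :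
    posCount (reg (H D) (D + 3)) (ty D) (place D f) (Sum.inl i) =
      mob f i + (if hub (f i) = true then 1 else 0) := by
  unfold posCount mob
  simp only [place_adj]
  rw [Finset.card_filter, Fintype.sum_sum_type, Fintype.sum_prod_type]
  simp only [place, H, HAdj, ty]
  congr 1
  · simp
  · rcases four (f i) with h | h | h | h <;>
      simp [-Finset.sum_boole, h, hub, Fin.sum_univ_succ]

lemma neg_eq (D : ℕ) (f : Fin 3 → Fin 4) (i : Fin 3) :
    negCountAll (reg (H D) (D + 3)) (ty D) (place D f) (Sum.inl i) =
      (if hub (f i) = true then D + 1 else 0) := by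
  unfold negCountAll
  simp only [place_adj]
  rw [Finset.card_filter, Fintype.sum_sum_type, Fintype.sum_prod_type]
  simp only [place, H, HAdj, ty]
  rcases four (f i) with h | h | h | h <;>
    simp [-Finset.sum_boole, h, hub, Fin.sum_univ_succ]

lemma cost_eq {V A : Type*} [Fintype V] [Fintype A] {k : ℕ} (G : SimpleGraph V) (t : A → Fin k)
    (τ : ℝ) (p : A → V) (a : A) :
    costAll G t τ p a = if posCount G t p a + negCountAll G t p a = 0 then τ
      else max 0 (τ - (posCount G t p a : ℝ) /
        ((posCount G t p a : ℝ) + (negCountAll G t p a : ℝ))) := by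
  have h : (nbrs G p a).card = posCount G t p a + negCountAll G t p a := by
    unfold nbrs posCount negCountAll
    rw [← Finset.card_filter_add_card_filter_not (s := Finset.univ.filter fun b => G.Adj (p a) (p b))
      (fun b => t b = t a), Finset.filter_filter, Finset.filter_filter]
  unfold costAll
  rw [← h]
  simp only [Finset.card_eq_zero]

def tab : Fin 13 → Fin 3 → Fin 4 :=
  ![![2,1,0], ![2,1,3], ![2,0,3], ![1,0,3], ![1,0,2], ![1,3,2], ![0,3,2], ![0,3,1], ![0,2,1],
    ![3,2,1], ![3,2,0], ![3,1,0], ![2,1,0]]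

lemma tab_step : ∀ i : Fin 12, ∃ (a : Fin 3) (v : Fin 4),
    (∀ b, tab i.castSucc b ≠ v) ∧ (∀ b, tab i.succ b = if b = a then v else tab i.castSucc b) ∧
    ((hub (tab i.castSucc a) = true ∧ mob (tab i.castSucc) a = 1 ∧
      hub (tab i.succ a) = false ∧ mob (tab i.succ) a = 1) ∨
     (hub (tab i.castSucc a) = false ∧ mob (tab i.castSucc) a = 0 ∧
      hub (tab i.succ a) = true ∧ mob (tab i.succ) a = 0)) := by
  decide

lemma step (D : ℕ) (τ : ℝ) (h1 : 2 / ((D : ℝ) + 3) < τ) (h2 : τ < 1) (f g : Fin 3 → Fin 4)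
    (a : Fin 3) (v : Fin 4) (hv : ∀ b, f b ≠ v) (hg : ∀ b, g b = if b = a then v else f b)
    (h : (hub (f a) = true ∧ mob f a = 1 ∧ hub (g a) = false ∧ mob g a = 1) ∨
     (hub (f a) = false ∧ mob f a = 0 ∧ hub (g a) = true ∧ mob g a = 0)) :
    ImprovingJump (costAll (reg (H D) (D + 3)) (ty D) τ) (place D f) (place D g) := by
  refine ⟨Sum.inl a, (Sum.inl v, fun _ => false), ?_, ?_, ?_⟩
  · rintro (b | l) hb
    · simp only [place, Prod.mk.injEq, and_true] at hb
      exact hv b (Sum.inl.inj hb)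
    · simp [place] at hb
  · funext b
    rcases b with b | l
    · by_cases hb : b = a
      · subst hb; simp [place, hg]
      · simp [place, hg, hb]
    · simp [place]
  · have hτ : 0 < τ := lt_trans (by positivity) h1
    rw [cost_eq, cost_eq, pos_eq, pos_eq, neg_eq, neg_eq]
    rcases h with ⟨a1, a2, a3, a4⟩ | ⟨a1, a2, a3, a4⟩
    · simp only [a1, a2, a3, a4]
      have e : (2 : ℝ) / (2 + (D + 1)) = 2 / (D + 3) := by congr 1; ring
      norm_num
      rw [e]
      exact ⟨h1, h1.trans h2⟩
    · simp only [a1, a2, a3, a4]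
      have : (0 : ℝ) < 1 / (1 + (D + 1)) := by positivity
      norm_num at this ⊢
      exact ⟨hτ, by positivity⟩

section transfer

variable {V' A' : Type*} [Fintype V'] [Fintype A']

lemma card_transfer {A A' : Type*} [Fintype A] [Fintype A'] (e : A ≃ A') (P : A' → Prop)
    [DecidablePred P] [DecidablePred fun a => P (e a)] :
    (Finset.univ.filter P).card = (Finset.univ.filter fun a => P (e a)).card := by
  symm
  apply Finset.card_equiv e
  simp

lemma cost_transfer {V A V' A' : Type*} [Fintype V] [Fintype A] [Fintype V'] [Fintype A'] {k : ℕ}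
    (G : SimpleGraph V) (t : A → Fin k) (τ : ℝ) (eV : V ≃ V') (eA : A ≃ A') (p : A → V) (a : A) :
    costAll (G.comap eV.symm) (t ∘ eA.symm) τ (eV ∘ p ∘ eA.symm) (eA a) = costAll G t τ p a := by
  rw [cost_eq, cost_eq]
  have h1 : posCount (G.comap eV.symm) (t ∘ eA.symm) (eV ∘ p ∘ eA.symm) (eA a)
      = posCount G t p a := by
    unfold posCount
    rw [card_transfer eA]
    simp
  have h2 : negCountAll (G.comap eV.symm) (t ∘ eA.symm) (eV ∘ p ∘ eA.symm) (eA a)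
      = negCountAll G t p a := by
    unfold negCountAll
    rw [card_transfer eA]
    simp
  rw [h1, h2]

lemma jump_transfer {V A V' A' : Type*} [Fintype V] [Fintype A] [Fintype V'] [Fintype A'] {k : ℕ}
    (G : SimpleGraph V) (t : A → Fin k) (τ : ℝ) (eV : V ≃ V') (eA : A ≃ A') (p q : A → V)
    (h : ImprovingJump (costAll G t τ) p q) :
    ImprovingJump (costAll (G.comap eV.symm) (t ∘ eA.symm) τ)
      (eV ∘ p ∘ eA.symm) (eV ∘ q ∘ eA.symm) := by
  obtain ⟨a, v, h1, h2, h3⟩ := h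
  refine ⟨eA a, eV v, ?_, ?_, ?_⟩
  · intro b hb
    exact h1 _ (eV.injective hb)
  · funext b
    obtain ⟨b, rfl⟩ := eA.surjective b
    by_cases hb : b = a
    · subst hb; simp [h2]
    · simp [h2, hb]
  · rw [cost_transfer, cost_transfer]
    exact h3

end transfer

end Aux

/-- For every `Δ ≥ 3` and every `2/Δ < τ < 1` there are a `Δ`-regular graph, two
surjectively used agent types on `|A| < |V|` agents and an improving response cycle for
the `1`-`k`-JSG with parameter `τ`; in particular this game is no potential game. -/
theorem statement7 (Δ : ℕ) (hΔ : 3 ≤ Δ) (τ : ℝ) (hτ1 : 2 / (Δ : ℝ) < τ) (hτ2 : τ < 1) :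
    ∃ (N M : ℕ) (G : SimpleGraph (Fin N)) (t : Fin M → Fin 2),
      IsRegular G Δ ∧ M < N ∧ Function.Surjective t ∧
      ∃ (ℓ : ℕ) (q : ℕ → Fin M → Fin N), 1 ≤ ℓ ∧ Function.Injective (q 0) ∧ q ℓ = q 0 ∧
        ∀ i < ℓ, ImprovingJump (costAll G t τ) (q i) (q (i + 1)) := by
  obtain ⟨D, rfl⟩ : ∃ D, Δ = D + 3 := ⟨Δ - 3, by omega⟩
  have hτ1' : 2 / ((D : ℝ) + 3) < τ := by push_cast at hτ1; exact hτ1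
  let eV := Fintype.equivFin (BV D × (Fin (D + 3) → Bool))
  let eA := Fintype.equivFin (BA D)
  refine ⟨_, _, (reg (H D) (D + 3)).comap eV.symm, ty D ∘ eA.symm, ?_, ?_, ?_, 12,
    fun n => eV ∘ place D (tab (Fin.ofNat 13 n)) ∘ eA.symm, by norm_num, ?_, ?_, ?_⟩
  · intro v
    rw [card_transfer eV]
    have := reg_isRegular (H D) (D + 3) (deg_le D) (eV.symm v)
    simpa using this
  · have hc : Fintype.card (BA D) < Fintype.card (BV D) := by simp
    refine lt_of_lt_of_le hc ?_
    rw [Fintype.card_prod]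
    exact Nat.le_mul_of_pos_right _ Fintype.card_pos
  · refine Function.Surjective.comp ?_ eA.symm.surjective
    intro c
    fin_cases c
    · exact ⟨Sum.inl 0, rfl⟩
    · exact ⟨Sum.inr (0, 1), by simp [ty]⟩
  · refine eV.injective.comp (Function.Injective.comp ?_ eA.symm.injective)
    have hi : Function.Injective (tab (Fin.ofNat 13 0)) := by
      have : ∀ a b, tab (Fin.ofNat 13 0) a = tab (Fin.ofNat 13 0) b → a = b := by decide
      exact this
    rintro (a | l) (b | m) hab
    · simp only [place, Prod.mk.injEq, and_true] at hab
      rw [hi (Sum.inl.inj hab)]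
    · simp [place] at hab
    · simp [place] at hab
    · simp only [place, Prod.mk.injEq, and_true] at hab
      rw [Sum.inr.inj hab]
  · have : tab (Fin.ofNat 13 12) = tab (Fin.ofNat 13 0) := by decide
    simp only [this]
  · intro n hn
    obtain ⟨a, v, h1, h2, h3⟩ := tab_step ⟨n, hn⟩
    have e1 : (Fin.ofNat 13 n) = (⟨n, hn⟩ : Fin 12).castSucc := by
      ext; simp; omega
    have e2 : (Fin.ofNat 13 (n + 1)) = (⟨n, hn⟩ : Fin 12).succ := by
      ext; simp; omega
    apply jump_transfer
    rw [e1, e2]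
    exact step D τ hτ1' hτ2 _ _ a v h1 h2 h3

end Schelling
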